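/- arXiv:2101.07546 — 2 statements merged into one kernel-verified Lean document; each statement's English description precedes it below -/
import Mathlib

section
/- Let d, k, Q ∈ ℕ with Q ≥ 2 and 1 ≤ k ≤ d. Let y ∈ B(d,k), let T ⊆ B(d,k) with y ∉ T, and set S = supp(y). Then every restriction w|_S with w ∈ star_Q(T) has at least one zero coordinate, and consequently |{ w|_S : w ∈ star_Q(T) }| ≤ k · Q^{k−1}. -/
open scoped Classical

/-- The support of a word `w ∈ [Q]^d`: the set of coordinates where `w` is nonzero. -/
def supp {d Q : ℕ} [NeZero Q] (w : Fin d → Fin Q) : Finset (Fin d) :=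
  Finset.univ.filter (fun i => w i ≠ 0)

/-- `star_Q(T)`: all `Q`-ary words whose support is contained in the support of some
binary word in `T`. -/
def starQ {d : ℕ} (Q : ℕ) [NeZero Q] (T : Set (Fin d → Fin 2)) : Set (Fin d → Fin Q) :=
  {w | ∃ y ∈ T, supp w ⊆ supp y}

/-- The restriction `w|_S` of a word `w` to the coordinates in `S`. -/
def restrict {d Q : ℕ} (S : Finset (Fin d)) (w : Fin d → Fin Q) : S → Fin Q :=
  fun i => w i

/-!
If `S` is contained in no support of a word of `T`, then it is contained in no support of a word
of `star_Q(T)` either, so every restriction to `S` vanishes somewhere; a union bound over the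
`|S|` positions of a zero gives the cardinality estimate. Distinct binary words of the same weight
have incomparable supports, so `S = supp y` qualifies.
-/

section Counting

variable {ι α : Type*} [Fintype ι] [Fintype α]

lemma ncard_setOf_apply_eq (i : ι) (a : α) :
    {f : ι → α | f i = a}.ncard = Fintype.card α ^ (Fintype.card ι - 1) := by
  simpa [Set.ncard_eq_toFinset_card'] using
    Fintype.card_filter_piFinset_const_eq_of_mem Finset.univ i (Finset.mem_univ a)

lemma ncard_setOf_exists_apply_eq_le (b : ι → α) :
    {f : ι → α | ∃ i, f i = b i}.ncard ≤ Fintype.card ι * Fintype.card α ^ (Fintype.card ι - 1) :=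
  calc {f : ι → α | ∃ i, f i = b i}.ncard
      = (⋃ i, {f : ι → α | f i = b i}).ncard := by rw [Set.ofPred_exists]
    _ ≤ ∑ i, {f : ι → α | f i = b i}.ncard := Set.ncard_iUnion_le_of_fintype _
    _ = Fintype.card ι * Fintype.card α ^ (Fintype.card ι - 1) := by
      simp [ncard_setOf_apply_eq]

end Counting

section Words

variable {d Q : ℕ} [NeZero Q]

lemma mem_supp {w : Fin d → Fin Q} {i : Fin d} : i ∈ supp w ↔ w i ≠ 0 := by
  simp [supp]

lemma supp_binary_injective : Function.Injective (supp : (Fin d → Fin 2) → Finset (Fin d)) := by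
  intro y z h
  funext i
  have hi : y i ≠ 0 ↔ z i ≠ 0 := by rw [← mem_supp, ← mem_supp, h]
  lia

lemma eq_of_supp_subset_of_card_le {y z : Fin d → Fin 2} (hyz : supp y ⊆ supp z)
    (hcard : (supp z).card ≤ (supp y).card) : y = z :=
  supp_binary_injective (Finset.eq_of_subset_of_card_le hyz hcard)

lemma exists_restrict_eq_zero_iff {S : Finset (Fin d)} {w : Fin d → Fin Q} :
    (∃ i : S, restrict S w i = 0) ↔ ¬ S ⊆ supp w := by
  simp [Finset.not_subset, mem_supp, restrict]

theorem stmt_3_general {S : Finset (Fin d)} {T : Set (Fin d → Fin 2)}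
    (hST : ∀ z ∈ T, ¬ S ⊆ supp z) :
    (∀ w ∈ starQ Q T, ∃ i : S, restrict S w i = 0) ∧
      (restrict S '' starQ Q T).ncard ≤ S.card * Q ^ (S.card - 1) := by
  have hzero : ∀ w ∈ starQ Q T, ∃ i : S, restrict S w i = 0 := by
    rintro w ⟨z, hz, hwz⟩
    exact exists_restrict_eq_zero_iff.mpr fun hSw ↦ hST z hz (hSw.trans hwz)
  refine ⟨hzero, ?_⟩
  calc (restrict S '' starQ Q T).ncard
      ≤ {f : S → Fin Q | ∃ i, f i = 0}.ncard := Set.ncard_le_ncard (Set.image_subset_iff.mpr hzero)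
    _ ≤ S.card * Q ^ (S.card - 1) := by
      simpa using ncard_setOf_exists_apply_eq_le (0 : S → Fin Q)

end Words

/-- Let `d, k, Q ∈ ℕ` with `Q ≥ 2` and `1 ≤ k ≤ d`.  Let `y ∈ B(d,k)`,
let `T ⊆ B(d,k)` with `y ∉ T`, and set `S = supp(y)`.  Then every restriction `w|_S` with
`w ∈ star_Q(T)` has at least one zero coordinate, and consequently
`|{ w|_S : w ∈ star_Q(T) }| ≤ k · Q^(k−1)`. -/
theorem stmt_3 (d k Q : ℕ) [NeZero Q] (hQ : 2 ≤ Q) (hk : 1 ≤ k) (hkd : k ≤ d)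
    (T : Set (Fin d → Fin 2)) (hT : ∀ z ∈ T, (supp z).card = k)
    (y : Fin d → Fin 2) (hycard : (supp y).card = k) (hy : y ∉ T) :
    (∀ w ∈ starQ Q T, ∃ i : (supp y : Finset (Fin d)), restrict (supp y) w i = 0) ∧
      (restrict (supp y) '' starQ Q T).ncard ≤ k * Q ^ (k - 1) := by
  subst hycard
  exact stmt_3_general fun z hz hyz ↦ hy (eq_of_supp_subset_of_card_le hyz (hT z hz).le ▸ hz)
end

section
/- Fix ε, γ ∈ (0,1) and d ∈ ℕ with εd an integer. Let 𝒞 ⊆ B(d, εd) be a code such that any two distinct codewords have at most (ε² + γ)d ones in common. Let T ⊆ 𝒞, let y ∈ 𝒞 \ T, and set S = {1,…,d} \ supp(y). Then the number of words w ∈ star_2(T) with w|_S equal to the all-zeros pattern 0_S is at most |T| · 2^{(ε²+γ)d}. -/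
open scoped Classical

/-- The support of a binary word: the set of coordinates where it equals 1. -/
def supp2 {d : ℕ} (w : Fin d → Fin 2) : Finset (Fin d) :=
  Finset.univ.filter (fun i => w i ≠ 0)

/-- `star_2(T)`: all binary words whose support is contained in the support of some
word in `T`. -/
def star2 {d : ℕ} (T : Finset (Fin d → Fin 2)) : Finset (Fin d → Fin 2) :=
  Finset.univ.filter (fun w => ∃ y ∈ T, supp2 w ⊆ supp2 y)

/-!
A word supported in `supp2 x` that vanishes off `supp2 y` is supported in `supp2 x ∩ supp2 y`, so
each `x ∈ T` accounts for exactly `2 ^ #(supp2 x ∩ supp2 y)` of the words in question. A union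
bound over `T` finishes the count.
-/

section

variable {d : ℕ}

theorem mem_supp2 {w : Fin d → Fin 2} {i : Fin d} : i ∈ supp2 w ↔ w i ≠ 0 := by
  simp only [supp2, Finset.mem_filter_univ]

theorem mem_star2 {T : Finset (Fin d → Fin 2)} {w : Fin d → Fin 2} :
    w ∈ star2 T ↔ ∃ x ∈ T, supp2 w ⊆ supp2 x := by
  simp only [star2, Finset.mem_filter_univ]

theorem disjoint_supp2_iff {w : Fin d → Fin 2} {S : Finset (Fin d)} :
    Disjoint (supp2 w) S ↔ ∀ i ∈ S, w i = 0 := by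
  simp only [Finset.disjoint_right, mem_supp2, not_not]

theorem card_filter_supp2_subset (A : Finset (Fin d)) :
    (Finset.univ.filter fun w : Fin d → Fin 2 => supp2 w ⊆ A).card = 2 ^ A.card := by
  have filter_eq_piFinset : (Finset.univ.filter fun w : Fin d → Fin 2 => supp2 w ⊆ A) =
      Fintype.piFinset fun i => if i ∈ A then Finset.univ else {0} := by
    ext w
    simp only [Finset.mem_filter_univ, Fintype.mem_piFinset, Finset.subset_iff, mem_supp2]
    refine forall_congr' fun i => ?_
    by_cases hi : i ∈ A <;> simp [hi]
  rw [filter_eq_piFinset, Fintype.card_piFinset]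
  simp [apply_ite Finset.card]

theorem filter_star2_eq_biUnion (T : Finset (Fin d → Fin 2)) (S : Finset (Fin d)) :
    ((star2 T).filter fun w => ∀ i ∈ S, w i = 0) =
      T.biUnion fun x => Finset.univ.filter fun w => supp2 w ⊆ supp2 x \ S := by
  ext w
  simp only [Finset.mem_filter, mem_star2, ← disjoint_supp2_iff, Finset.mem_biUnion,
    Finset.mem_univ, true_and, Finset.subset_sdiff, exists_and_right, ← and_assoc]

theorem card_filter_star2_le_sum (T : Finset (Fin d → Fin 2)) (S : Finset (Fin d)) :
    ((star2 T).filter fun w => ∀ i ∈ S, w i = 0).card ≤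
      ∑ x ∈ T, 2 ^ (supp2 x \ S).card := by
  rw [filter_star2_eq_biUnion]
  refine Finset.card_biUnion_le.trans_eq (Finset.sum_congr rfl fun x _ => ?_)
  exact card_filter_supp2_subset _

theorem stmt_8_general (T : Finset (Fin d → Fin 2)) (y : Fin d → Fin 2) (r : ℝ)
    (hr : ∀ x ∈ T, ((supp2 x ∩ supp2 y).card : ℝ) ≤ r) :
    (((star2 T).filter
          (fun w => ∀ i ∈ (Finset.univ \ supp2 y : Finset (Fin d)), w i = 0)).card : ℝ)
      ≤ (T.card : ℝ) * (2 : ℝ) ^ r := by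
  have sdiff_compl_eq_inter (x : Fin d → Fin 2) :
      supp2 x \ (Finset.univ \ supp2 y) = supp2 x ∩ supp2 y := by
    rw [← Finset.compl_eq_univ_sdiff, sdiff_compl, Finset.inf_eq_inter]
  calc
    _ ≤ ∑ x ∈ T, (2 : ℝ) ^ (supp2 x \ (Finset.univ \ supp2 y)).card := by
      exact_mod_cast card_filter_star2_le_sum T _
    _ = ∑ x ∈ T, (2 : ℝ) ^ ((supp2 x ∩ supp2 y).card : ℝ) := by
      simp only [sdiff_compl_eq_inter, Real.rpow_natCast]
    _ ≤ ∑ _x ∈ T, (2 : ℝ) ^ r :=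
      Finset.sum_le_sum fun x hx => Real.rpow_le_rpow_of_exponent_le one_le_two (hr x hx)
    _ = T.card * (2 : ℝ) ^ r := by rw [Finset.sum_const, nsmul_eq_mul]

end

/-- Fix `ε, γ ∈ (0,1)` and `d ∈ ℕ` with `k = εd` an integer.  Let
`𝒞 ⊆ B(d, εd)` be a code such that any two distinct codewords have at most `(ε² + γ)d`
ones in common.  Let `T ⊆ 𝒞`, let `y ∈ 𝒞 \ T`, and set `S = {1,…,d} \ supp(y)`.  Then the
number of words `w ∈ star_2(T)` with `w|_S` equal to the all-zeros pattern is at most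
`|T| · 2^{(ε²+γ)d}`. -/
theorem stmt_8 (d k : ℕ) (ε γ : ℝ) (hε : ε ∈ Set.Ioo (0 : ℝ) 1)
    (hγ : γ ∈ Set.Ioo (0 : ℝ) 1) (hk : (k : ℝ) = ε * d)
    (𝒞 : Finset (Fin d → Fin 2)) (hw : ∀ z ∈ 𝒞, (supp2 z).card = k)
    (hcode : ∀ x ∈ 𝒞, ∀ x' ∈ 𝒞, x ≠ x' →
      ((supp2 x ∩ supp2 x').card : ℝ) ≤ (ε ^ 2 + γ) * d)
    (T : Finset (Fin d → Fin 2)) (hT : T ⊆ 𝒞)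
    (y : Fin d → Fin 2) (hy𝒞 : y ∈ 𝒞) (hyT : y ∉ T) :
    (((star2 T).filter
          (fun w => ∀ i ∈ (Finset.univ \ supp2 y : Finset (Fin d)), w i = 0)).card : ℝ)
      ≤ (T.card : ℝ) * (2 : ℝ) ^ ((ε ^ 2 + γ) * d) :=
  stmt_8_general T y _ fun x hx => hcode x (hT hx) y hy𝒞 (ne_of_mem_of_not_mem hx hyT)
end
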